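/- Window formula for the reversed consecutive composition (key computation in the proof of Proposition 8.2): Let k ≥ 2, r ≥ 2, n = rk. Define the k-periodic map U on configurations by: U(v)_j = v_{j+k−1} if j ≡ 1 (mod k); and, for j ≡ ℓ (mod k) with 2 ≤ ℓ ≤ k, U(v)_j = (v_{j−1} v_{j+k−ℓ}) ∩ (v_{j+k−ℓ+1} v_{j+k−ℓ+2} ⋯ v_{j+2k−ℓ−1}) (the degree-one Grassmann–Cayley meet of the pair v_{j−1}, v_{j+k−ℓ} with the k−1 vectors v_{j+k−ℓ+1},…,v_{j+2k−ℓ−1}); equivalently, U has window notation [v_k, (v_1 v_k) ∩ (v_{k+1}⋯v_{2k−1}), (v_2 v_k) ∩ (v_{k+1}⋯v_{2k−1}), …, (v_{k−1} v_k) ∩ (v_{k+1}⋯v_{2k−1})]. Then for every index j ∈ ZMod n there exist a sign ε_j ∈ {+1, −1} and a Laurent monomial M_j in the frozen minors (both independent of v) such that for every generic configuration v, the j-th vector of (σ_1 ∘ σ_2 ∘ ⋯ ∘ σ_{k−1})(v) equals ε_j · M_j(v) · U(v)_j. -/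

import Mathlib

open scoped BigOperators

noncomputable section

/-- Determinant of the `k × k` matrix whose `b`-th column is `c b`. -/
def colDet {k : ℕ} (c : Fin k → Fin k → ℂ) : ℂ :=
  Matrix.det (Matrix.of fun a b => c b a)

/-- The frozen Plücker minor `Δ_m(v)`, on the `k` cyclically consecutive
columns starting at `m`. -/
def frozen (k n : ℕ) (v : ZMod n → Fin k → ℂ) (m : ZMod n) : ℂ :=
  colDet (fun b : Fin k => v (m + ((b : ℕ) : ZMod n)))

/-- A configuration is generic if all frozen minors are nonzero. -/
def Generic (k n : ℕ) (v : ZMod n → Fin k → ℂ) : Prop :=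
  ∀ m : ZMod n, frozen k n v m ≠ 0

/-- The Laurent monomial `∏_m Δ_m(v)^(e m)` in the frozen minors. -/
def laurent (k n : ℕ) (e : Fin n → ℤ) (v : ZMod n → Fin k → ℂ) : ℂ :=
  ∏ m : Fin n, frozen k n v ((m : ℕ) : ZMod n) ^ e m

/-- The Artin generator `σ_i` acting on configurations. -/
def artin (k n i : ℕ) (v : ZMod n → Fin k → ℂ) : ZMod n → Fin k → ℂ :=
  fun j =>
    if (ZMod.val j) % k = i % k then v (j + 1)
    else if (ZMod.val j) % k = (i + 1) % k then
      (colDet (fun b : Fin k =>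
          if (b : ℕ) = 0 then v (j - 1) else v (j + ((b : ℕ) : ZMod n)))) • v j
        - (frozen k n v j) • v (j - 1)
    else v j

/-- `artinComp k n i v = σ_i (σ_{i-1} (⋯ (σ_1 v)))`. -/
def artinComp (k n : ℕ) : ℕ → (ZMod n → Fin k → ℂ) → ZMod n → Fin k → ℂ
  | 0, v => v
  | m + 1, v => artin k n (m + 1) (artinComp k n m v)

/-- `artinCompRev k n i v = σ_1 (σ_2 (⋯ (σ_i v)))`. -/
def artinCompRev (k n : ℕ) : ℕ → (ZMod n → Fin k → ℂ) → ZMod n → Fin k → ℂ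
  | 0, v => v
  | m + 1, v => artinCompRev k n m (artin k n (m + 1) v)

/-- The degree-one Grassmann–Cayley meet
`(a_1 ⋯ a_p) ∩ (b_1 ⋯ b_q)` (intended for `p + q = k + 1`):
`Σ_{i=1}^{p} (−1)^{p−i} · det(a_1 | ⋯ | â_i | ⋯ | a_p | b_1 | ⋯ | b_q) · a_i`. -/
def gcMeet {k p q : ℕ} (a : Fin p → Fin k → ℂ) (b : Fin q → Fin k → ℂ) : Fin k → ℂ :=
  ∑ i : Fin p, ((-1 : ℂ) ^ (p - 1 - (i : ℕ)) *
    colDet (fun c : Fin k =>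
      if hc : (c : ℕ) < p - 1 then
        (if hci : (c : ℕ) < (i : ℕ) then a ⟨(c : ℕ), Nat.lt_trans hci i.isLt⟩
         else a ⟨(c : ℕ) + 1, by have := i.isLt; omega⟩)
      else if hq : (c : ℕ) - (p - 1) < q then b ⟨(c : ℕ) - (p - 1), hq⟩ else 0)) • a i



/-- The k-periodic map `U` with window notation
`[v_k, (v_1 v_k) ∩ (v_{k+1} ⋯ v_{2k−1}), …, (v_{k−1} v_k) ∩ (v_{k+1} ⋯ v_{2k−1})]`. -/
def Umap (k n : ℕ) (v : ZMod n → Fin k → ℂ) : ZMod n → Fin k → ℂ :=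
  fun j =>
    if (ZMod.val j) % k = 1 % k then v (j + ((k - 1 : ℕ) : ZMod n))
    else
      let l : ℕ := if (ZMod.val j) % k = 0 then k else (ZMod.val j) % k
      gcMeet
        (fun m : Fin 2 =>
          if (m : ℕ) = 0 then v (j - 1) else v (j + ((k - l : ℕ) : ZMod n)))
        (fun m : Fin (k - 1) =>
          v (j + ((k - l : ℕ) : ZMod n) + 1 + ((m : ℕ) : ZMod n)))

/-!
Both `σ_i` and `U` are built from meets `(a c₀) ∩ (c₁ ⋯ c_{k-1})`. Up to a scalar such a meet
depends only on `a`, `c₀` and the hyperplane spanned by `c₁, …, c_{k-1}`, the scalar being the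
quotient of the determinants `det(c₀ | ⋯ | c_{k-1})`. After `σ_{i+1} ∘ ⋯ ∘ σ_{k-1}` a window
`v_1, …, v_k` has become `v_1, …, v_i, v_k, M_{i+2} U_{i+2}, …, M_k U_k` with
`U_l = (v_{l-1} v_k) ∩ (v_{k+1} ⋯ v_{2k-1})`. Every `U_l` lies in the hyperplane spanned by
`v_{k+1}, …, v_{2k-1}`, so the meet which `σ_i` puts in position `i + 1` is a multiple of `U_{i+1}`.
The scalar is a quotient of determinants; modulo the column `v_k` the `U_l` are just
`-Δ_k v_{l-1}`, and moving `v_k` back into its place cancels all the signs. The resulting recursion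
`M_l Δ_k = Δ_l ∏_{m > l} M_m Δ_k` is solved by `M_l Δ_k = Δ_l ∏_{m = l+1}^{k} Δ_m ^ 2^{m-l-1}`.
-/

section Determinants

variable {R : Type*} [CommRing R]

theorem det_updateRow_mul_apply {ι : Type*} [Fintype ι] [DecidableEq ι] (A : Matrix ι ι R) (i : ι)
    (f : (ι → R) →ₗ[R] R) (hf : ∀ b, b ≠ i → f (A b) = 0) (x : ι → R) :
    (A.updateRow i x).det * f (A i) = A.det * f x := by
  have cramer_expansion : ∑ b, (A.updateRow b x).det • A b = A.det • x := by
    simpa only [Matrix.mulVec_eq_sum, Matrix.transpose_transpose, Matrix.cramer_transpose_apply,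
      Matrix.det_transpose, op_smul_eq_smul] using Matrix.mulVec_cramer A.transpose x
  have applied := congrArg f cramer_expansion
  rw [map_sum, Finset.sum_eq_single i (fun b _ hb => by rw [map_smul, hf b hb, smul_zero])
    (fun hi => absurd (Finset.mem_univ i) hi)] at applied
  simpa only [map_smul, smul_eq_mul] using applied

theorem detRowAlternating_vecCons_smul_add {m : ℕ} (x : Fin (m + 1) → R) (a t : Fin m → R)
    (z : Fin m → Fin (m + 1) → R) :
    Matrix.detRowAlternating (Matrix.vecCons x fun j => a j • x + t j • z j) =
      (∏ j, t j) * Matrix.detRowAlternating (Matrix.vecCons x z) := by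
  have scale := Matrix.det_mul_column (Matrix.vecCons 1 t) (Matrix.vecCons x z)
  rw [Fin.prod_univ_succ, Matrix.cons_val_zero, one_mul] at scale
  refine Eq.trans ?_ scale
  refine Matrix.det_eq_of_forall_row_eq_smul_add_const (Matrix.vecCons 0 a) 0 rfl fun b l => ?_
  refine Fin.cases ?_ (fun j => ?_) b
  · simp
  · simp [add_comm]

theorem detRowAlternating_vecCons_succAbove {m : ℕ} (p : Fin (m + 1)) (a t : Fin m → R)
    (u : Fin (m + 1) → Fin (m + 1) → R) :
    Matrix.detRowAlternating (Matrix.vecCons (u p) fun j => a j • u p + t j • u (p.succAbove j)) =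
      (-1) ^ (p : ℕ) * (∏ j, t j) * Matrix.detRowAlternating u := by
  have move := Matrix.detRowAlternating.neg_one_pow_smul_map_insertNth p (u p) (p.removeNth u)
  rw [Fin.insertNth_self_removeNth, zsmul_eq_mul] at move
  push_cast at move
  rw [detRowAlternating_vecCons_smul_add, mul_right_comm, move, mul_comm]
  rfl

theorem prod_ite_lt_neg {m p : ℕ} (hp : p ≤ m) (s : ℕ → R) :
    ∏ j : Fin m, (if (j : ℕ) < p then -s j else 1) = (-1) ^ p * ∏ b ∈ Finset.range p, s b := by
  rw [Fin.prod_univ_eq_prod_range (fun b => if b < p then -s b else 1), ← Finset.prod_filter]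
  have : {b ∈ Finset.range m | b < p} = Finset.range p := by
    ext b
    simp only [Finset.mem_filter, Finset.mem_range]
    omega
  rw [this, Finset.prod_neg, Finset.card_range]

end Determinants

theorem prod_pow_two_pow {M : Type*} [CommMonoid M] (d : ℕ → M) (p : ℕ) :
    ∏ b ∈ Finset.range p, d b ^ 2 ^ b =
      ∏ b ∈ Finset.range p, d b * ∏ c ∈ Finset.range (p - b - 1), d (b + 1 + c) ^ 2 ^ c := by
  induction p generalizing d with
  | zero => rfl
  | succ p ih =>
    have square : ∏ b ∈ Finset.range p, d (b + 1) ^ 2 ^ (b + 1) =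
        (∏ b ∈ Finset.range p, d (b + 1) ^ 2 ^ b) * ∏ b ∈ Finset.range p, d (b + 1) ^ 2 ^ b := by
      simp only [pow_succ 2, pow_mul, sq, Finset.prod_mul_distrib]
    rw [Finset.prod_range_succ', square, Finset.prod_range_succ']
    nth_rw 1 [ih fun b => d (b + 1)]
    simp only [Nat.add_sub_add_right, Nat.sub_zero, Nat.add_sub_cancel, Nat.zero_add, pow_zero,
      pow_one, add_right_comm _ 1, mul_assoc, mul_comm (d 0)]

section Meet

variable {k : ℕ}

theorem colDet_eq_detRowAlternating (c : Fin k → Fin k → ℂ) :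
    colDet c = Matrix.detRowAlternating c :=
  Matrix.det_transpose (Matrix.of c)

variable [NeZero k]

/-- The linear form `x ↦ det(x | c₁ | ⋯ | c_{k-1})`, whose kernel is the hyperplane spanned by
`c₁, …, c_{k-1}` when these are linearly independent. The column `c₀` is ignored. -/
def headForm (c : Fin k → Fin k → ℂ) : (Fin k → ℂ) →ₗ[ℂ] ℂ :=
  Matrix.detRowAlternating.toMultilinearMap.toLinearMap c 0

/-- The meet `(a c₀) ∩ (c₁ ⋯ c_{k-1})`. -/
def headMeet (c : Fin k → Fin k → ℂ) (a : Fin k → ℂ) : Fin k → ℂ :=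
  headForm c a • c 0 - colDet c • a

theorem headForm_apply (c : Fin k → Fin k → ℂ) (x : Fin k → ℂ) :
    headForm c x = colDet fun b => if (b : ℕ) = 0 then x else c b := by
  rw [colDet_eq_detRowAlternating]
  refine congrArg Matrix.detRowAlternating (funext fun b => ?_)
  simp only [Function.update_apply, Fin.val_eq_zero_iff]

theorem headForm_zero_column (c : Fin k → Fin k → ℂ) : headForm c (c 0) = colDet c := by
  rw [colDet_eq_detRowAlternating]
  exact congrArg Matrix.detRowAlternating (Function.update_eq_self 0 c)

theorem headForm_column (c : Fin k → Fin k → ℂ) {b : Fin k} (hb : b ≠ 0) :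
    headForm c (c b) = 0 :=
  Matrix.detRowAlternating.map_update_self c hb.symm

theorem headForm_headMeet (c : Fin k → Fin k → ℂ) (a : Fin k → ℂ) :
    headForm c (headMeet c a) = 0 := by
  rw [headMeet, map_sub, map_smul, map_smul, headForm_zero_column, smul_eq_mul, smul_eq_mul,
    mul_comm, sub_self]

theorem headMeet_eq_smul {c y : Fin k → Fin k → ℂ} (hc : colDet c ≠ 0) (h0 : y 0 = c 0)
    (hy : ∀ b, b ≠ 0 → headForm c (y b) = 0) (a : Fin k → ℂ) :
    headMeet y a = (colDet y / colDet c) • headMeet c a := by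
  have proportional : headForm y a * colDet c = colDet y * headForm c a := by
    rw [← headForm_zero_column c, ← h0, colDet_eq_detRowAlternating y]
    exact det_updateRow_mul_apply y 0 (headForm c) hy a
  rw [headMeet, headMeet, h0, smul_sub, smul_smul, smul_smul, div_mul_cancel₀ _ hc,
    div_mul_eq_mul_div, ← proportional, mul_div_cancel_right₀ _ hc]

theorem gcMeet_pair (c : Fin k → Fin k → ℂ) (a : Fin k → ℂ) (y : ℕ → Fin k → ℂ)
    (hy : ∀ b : Fin k, b ≠ 0 → y (b - 1) = c b) :
    gcMeet (fun m : Fin 2 => if (m : ℕ) = 0 then a else c 0) (fun m : Fin (k - 1) => y m) =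
      headMeet c a := by
  have tail (x : Fin k → ℂ) : headForm c x = colDet fun b : Fin k =>
      if (b : ℕ) < 1 then x else if (b : ℕ) - 1 < k - 1 then y (b - 1) else 0 := by
    rw [headForm_apply]
    refine congrArg colDet (funext fun b => ?_)
    by_cases hb : b = 0
    · simp [hb]
    · have : (b : ℕ) ≠ 0 := Fin.val_ne_zero_iff.mpr hb
      rw [if_neg this, if_neg (by omega), if_pos (by omega), hy b hb]
  rw [headMeet, ← headForm_zero_column c, tail, tail, gcMeet, Fin.sum_univ_two]
  simp only [Fin.val_zero, Fin.val_one, Nat.reduceSub, Nat.sub_zero, Nat.sub_self, pow_one,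
    pow_zero, neg_one_mul, one_mul, neg_smul, ↓reduceIte, one_ne_zero, neg_add_eq_sub]
  grind

theorem colDet_eq_prod_mul_colDet (c y : Fin k → Fin k → ℂ) (u : ℕ → Fin k → ℂ) (μ : ℕ → ℂ)
    (p : Fin k) (hc : c 0 = u p) (h0 : y 0 = u p)
    (hlt : ∀ b : ℕ, (hb : b < p) → y ⟨b + 1, by omega⟩ = μ b • headMeet c (u b))
    (hgt : ∀ b : Fin k, p < b → y b = u b) :
    colDet y = (∏ b ∈ Finset.range p, μ b * colDet c) * colDet fun b : Fin k => u b := by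
  obtain ⟨m, rfl⟩ := Nat.exists_eq_succ_of_ne_zero (NeZero.ne k)
  let a (j : Fin m) : ℂ := if (j : ℕ) < p then μ j * headForm c (u j) else 0
  let t (j : Fin m) : ℂ := if (j : ℕ) < p then -(μ j * colDet c) else 1
  have y_eq : y = Matrix.vecCons (u p) fun j => a j • u p + t j • u (p.succAbove j) := by
    refine funext fun b => Fin.cases h0 (fun j => ?_) b
    rw [Matrix.cons_val_succ]
    by_cases hj : (j : ℕ) < p
    · have : (p.succAbove j : ℕ) = j := by
        rw [Fin.succAbove_of_castSucc_lt _ _ hj, Fin.val_castSucc]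
      simp only [a, t, if_pos hj, this]
      rw [Fin.succ, hlt j hj, headMeet, hc]
      module
    · have : (p.succAbove j : ℕ) = j + 1 := by
        rw [Fin.succAbove_of_le_castSucc _ _ (not_lt.mp hj), Fin.val_succ]
      simp only [a, t, if_neg hj, this, zero_smul, one_smul, zero_add]
      exact hgt j.succ (Nat.lt_succ_of_le (not_lt.mp hj))
  have reorder := detRowAlternating_vecCons_succAbove p a t fun b => u b
  rw [prod_ite_lt_neg (Nat.le_of_lt_succ p.isLt) fun b => μ b * colDet c, ← mul_assoc, ← mul_pow,
    neg_one_mul, neg_neg, one_pow, one_mul] at reorder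
  rw [y_eq, colDet_eq_detRowAlternating, reorder, ← colDet_eq_detRowAlternating]

end Meet

section LaurentMonomials

variable {k n : ℕ}

/-- Functions of a configuration which agree, on generic configurations, with a Laurent monomial
in the frozen minors. -/
def IsLaurent (k n : ℕ) (f : (ZMod n → Fin k → ℂ) → ℂ) : Prop :=
  ∃ e : Fin n → ℤ, ∀ v, Generic k n v → f v = laurent k n e v

theorem isLaurent_one : IsLaurent k n fun _ => 1 :=
  ⟨0, fun v _ => by simp [laurent]⟩

theorem isLaurent_frozen [NeZero n] (m : ZMod n) : IsLaurent k n fun v => frozen k n v m := by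
  refine ⟨Pi.single ⟨m.val, m.val_lt⟩ 1, fun v _ => ?_⟩
  rw [laurent, Finset.prod_eq_single_of_mem ⟨m.val, m.val_lt⟩ (Finset.mem_univ _)]
  · simp
  · intro b _ hb
    simp [Pi.single_eq_of_ne hb]

theorem IsLaurent.mul {f g : (ZMod n → Fin k → ℂ) → ℂ} (hf : IsLaurent k n f)
    (hg : IsLaurent k n g) : IsLaurent k n fun v => f v * g v := by
  obtain ⟨e, he⟩ := hf
  obtain ⟨e', he'⟩ := hg
  refine ⟨e + e', fun v hv => ?_⟩
  simp only [he v hv, he' v hv, laurent, Pi.add_apply, zpow_add₀ (hv _), Finset.prod_mul_distrib]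

theorem IsLaurent.div {f g : (ZMod n → Fin k → ℂ) → ℂ} (hf : IsLaurent k n f)
    (hg : IsLaurent k n g) : IsLaurent k n fun v => f v / g v := by
  obtain ⟨e, he⟩ := hf
  obtain ⟨e', he'⟩ := hg
  refine ⟨e - e', fun v hv => ?_⟩
  simp only [he v hv, he' v hv, laurent, Pi.sub_apply, zpow_sub₀ (hv _), Finset.prod_div_distrib]

theorem IsLaurent.pow {f : (ZMod n → Fin k → ℂ) → ℂ} (hf : IsLaurent k n f) (a : ℕ) :
    IsLaurent k n fun v => f v ^ a := by
  obtain ⟨e, he⟩ := hf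
  refine ⟨fun m => e m * a, fun v hv => ?_⟩
  simp only [he v hv, laurent, zpow_mul, zpow_natCast, Finset.prod_pow]

theorem isLaurent_prod {ι : Type*} (s : Finset ι) {f : ι → (ZMod n → Fin k → ℂ) → ℂ}
    (hf : ∀ b, IsLaurent k n (f b)) : IsLaurent k n fun v => ∏ b ∈ s, f b v := by
  classical
  induction s using Finset.induction_on with
  | empty => simpa only [Finset.prod_empty] using isLaurent_one
  | insert b s hb ih => simpa only [Finset.prod_insert hb] using (hf b).mul ih

/-- The scalar `M_l` attached to an index `j` in position `l` of its window, in closed form; here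
`j + p`, with `p = k - l`, is the last index of that window. -/
def frozenWeight (k n : ℕ) (v : ZMod n → Fin k → ℂ) (j : ZMod n) (p : ℕ) : ℂ :=
  (frozen k n v j * ∏ b ∈ Finset.range p, frozen k n v (j + (b + 1 : ℕ)) ^ 2 ^ b) /
    frozen k n v (j + p)

theorem isLaurent_frozenWeight [NeZero n] (j : ZMod n) (p : ℕ) :
    IsLaurent k n fun v => frozenWeight k n v j p :=
  ((isLaurent_frozen j).mul (isLaurent_prod _ fun _ => (isLaurent_frozen _).pow _)).div
    (isLaurent_frozen _)

theorem frozenWeight_eq_prod {v : ZMod n → Fin k → ℂ} (hv : Generic k n v) (j : ZMod n) (p : ℕ) :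
    frozenWeight k n v j p =
      (∏ b ∈ Finset.range p,
        frozenWeight k n v (j + (b + 1 : ℕ)) (p - (b + 1)) * frozen k n v (j + p)) *
        frozen k n v j / frozen k n v (j + p) := by
  rw [frozenWeight, prod_pow_two_pow fun b => frozen k n v (j + (b + 1 : ℕ)), mul_comm]
  congr 2
  refine Finset.prod_congr rfl fun b hb => ?_
  have last : j + ((b + 1 : ℕ) : ZMod n) + ((p - (b + 1) : ℕ) : ZMod n) = j + (p : ZMod n) := by
    rw [add_assoc, ← Nat.cast_add, Nat.add_sub_of_le (Finset.mem_range.mp hb)]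
  rw [frozenWeight, last, div_mul_cancel₀ _ (hv _)]
  simp only [Nat.cast_add, Nat.sub_sub, add_assoc]

end LaurentMonomials

section Windows

variable {k n : ℕ}

/-- The position `l ∈ {1, …, k}` of the index `j` in its window, that is `j ≡ l (mod k)`. -/
def windowPos (k : ℕ) {n : ℕ} (j : ZMod n) : ℕ :=
  if j.val % k = 0 then k else j.val % k

theorem windowPos_eq_of_modEq {j : ZMod n} {l : ℕ} (h0 : 0 < l) (hl : l ≤ k)
    (h : j.val ≡ l [MOD k]) : windowPos k j = l := by
  rw [windowPos, h]
  rcases hl.lt_or_eq with hlt | rfl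
  · rw [Nat.mod_eq_of_lt hlt, if_neg h0.ne']
  · rw [Nat.mod_self, if_pos rfl]

theorem val_modEq_windowPos (j : ZMod n) : j.val ≡ windowPos k j [MOD k] := by
  rw [windowPos, Nat.ModEq]
  split_ifs with h
  · rw [h, Nat.mod_self]
  · rw [Nat.mod_mod]

theorem windowPos_eq_iff {j : ZMod n} {l : ℕ} (h0 : 0 < l) (hl : l ≤ k) :
    windowPos k j = l ↔ j.val % k = l % k :=
  ⟨fun h => h ▸ val_modEq_windowPos j, windowPos_eq_of_modEq h0 hl⟩

theorem val_add_natCast_modEq [NeZero n] (hkn : k ∣ n) (j : ZMod n) (b : ℕ) :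
    (j + (b : ZMod n)).val ≡ windowPos k j + b [MOD k] := by
  rw [ZMod.val_add, ZMod.val_natCast]
  exact ((Nat.mod_modEq _ _).trans ((Nat.mod_modEq b n).add_left _)).of_dvd hkn |>.trans
    ((val_modEq_windowPos j).add_right b)

theorem windowPos_add_natCast_of_lt [NeZero n] (hkn : k ∣ n) (j : ZMod n) {b : ℕ}
    (hlt : k < windowPos k j + b) (hle : windowPos k j + b ≤ 2 * k) :
    windowPos k (j + (b : ZMod n)) = windowPos k j + b - k := by
  refine windowPos_eq_of_modEq (by omega) (by omega) ((val_add_natCast_modEq hkn j b).trans ?_)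
  exact (Nat.ModEq.refl _).trans (Nat.mod_eq_sub_mod hlt.le)

variable [NeZero k]

theorem windowPos_le (j : ZMod n) : windowPos k j ≤ k := by
  rw [windowPos]
  split_ifs
  · exact le_rfl
  · exact (Nat.mod_lt _ (NeZero.pos k)).le

theorem windowPos_pos (j : ZMod n) : 0 < windowPos k j := by
  rw [windowPos]
  split_ifs with h
  · exact NeZero.pos k
  · exact Nat.pos_of_ne_zero h

variable [NeZero n]

theorem windowPos_add_natCast (hkn : k ∣ n) (j : ZMod n) {b : ℕ} (hb : windowPos k j + b ≤ k) :
    windowPos k (j + (b : ZMod n)) = windowPos k j + b :=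
  windowPos_eq_of_modEq (Nat.add_pos_left (windowPos_pos j) b) hb (val_add_natCast_modEq hkn j b)

theorem windowPos_sub_one (hkn : k ∣ n) {j : ZMod n} (hj : 1 < windowPos k j) :
    windowPos k (j - 1) = windowPos k j - 1 := by
  have next (l : ℕ) (hl : windowPos k (j - 1 + ((1 : ℕ) : ZMod n)) = l) : windowPos k j = l := by
    rwa [Nat.cast_one, sub_add_cancel] at hl
  have hk := NeZero.pos k
  rcases (windowPos_le (k := k) (j - 1)).eq_or_lt with hlast | hlt
  · have := next _ (windowPos_add_natCast_of_lt hkn (j - 1) (by omega) (by omega))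
    omega
  · have := next _ (windowPos_add_natCast hkn (j - 1) hlt)
    omega

end Windows

section Composition

variable {k n : ℕ}

/-- The `k` cyclically consecutive columns starting at `j`. -/
def columns (v : ZMod n → Fin k → ℂ) (j : ZMod n) : Fin k → Fin k → ℂ :=
  fun b => v (j + ((b : ℕ) : ZMod n))

theorem colDet_columns (v : ZMod n → Fin k → ℂ) (j : ZMod n) :
    colDet (columns v j) = frozen k n v j :=
  rfl

/-- The configuration `(σ_s ∘ ⋯ ∘ σ_{k-1})(v)`, in closed form. -/
def windowStage (s : ℕ) (v : ZMod n → Fin k → ℂ) : ZMod n → Fin k → ℂ :=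
  fun j =>
    if windowPos k j < s then v j
    else if windowPos k j = s then v (j + (k - s : ℕ))
    else frozenWeight k n v j (k - windowPos k j) • Umap k n v j

theorem windowStage_of_lt {s : ℕ} {j : ZMod n} (h : windowPos k j < s) (v : ZMod n → Fin k → ℂ) :
    windowStage s v j = v j :=
  if_pos h

theorem windowStage_of_eq {s : ℕ} {j : ZMod n} (h : windowPos k j = s) (v : ZMod n → Fin k → ℂ) :
    windowStage s v j = v (j + (k - s : ℕ)) := by
  rw [windowStage, if_neg h.not_lt, if_pos h]

theorem windowStage_of_gt {s : ℕ} {j : ZMod n} (h : s < windowPos k j) (v : ZMod n → Fin k → ℂ) :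
    windowStage s v j = frozenWeight k n v j (k - windowPos k j) • Umap k n v j := by
  rw [windowStage, if_neg h.not_gt, if_neg h.ne']

variable [NeZero k]

theorem columns_zero (v : ZMod n → Fin k → ℂ) (j : ZMod n) : columns v j 0 = v j := by
  simp [columns]

theorem artin_apply {i : ℕ} (h0 : 0 < i) (hi : i < k) (w : ZMod n → Fin k → ℂ) (j : ZMod n) :
    artin k n i w j =
      if windowPos k j = i then w (j + 1)
      else if windowPos k j = i + 1 then headMeet (columns w j) (w (j - 1))
      else w j := by
  simp only [artin, windowPos_eq_iff h0 hi.le, windowPos_eq_iff i.succ_pos hi, headMeet,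
    headForm_apply, columns_zero, colDet_columns]
  rfl

theorem Umap_of_windowPos_eq_one {j : ZMod n} (hj : windowPos k j = 1)
    (v : ZMod n → Fin k → ℂ) : Umap k n v j = v (j + (k - 1 : ℕ)) :=
  if_pos ((windowPos_eq_iff one_pos NeZero.one_le).mp hj)

theorem Umap_of_one_lt_windowPos {j : ZMod n} (hj : 1 < windowPos k j)
    (v : ZMod n → Fin k → ℂ) :
    Umap k n v j = headMeet (columns v (j + (k - windowPos k j : ℕ))) (v (j - 1)) := by
  have hne : j.val % k ≠ 1 % k := fun h =>
    hj.ne' ((windowPos_eq_iff one_pos NeZero.one_le).mpr h)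
  rw [Umap, if_neg hne, ← gcMeet_pair _ _ fun b =>
    v (j + (k - windowPos k j : ℕ) + 1 + (b : ZMod n)), columns_zero]
  · rfl
  · intro b hb
    rw [columns, Nat.cast_sub (Nat.one_le_iff_ne_zero.mpr (Fin.val_ne_zero_iff.mpr hb)),
      Nat.cast_one, add_assoc, add_sub_cancel]

theorem windowStage_self (v : ZMod n → Fin k → ℂ) : windowStage k v = v := by
  funext j
  rw [windowStage]
  split_ifs with hlt heq
  · rfl
  · simp
  · have := windowPos_le (k := k) j
    omega

variable [NeZero n]

theorem windowStage_add_of_le (hkn : k ∣ n) (v : ZMod n → Fin k → ℂ) {j : ZMod n} {b : ℕ}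
    (hb : windowPos k j + (b + 1) ≤ k) :
    windowStage (windowPos k j) v (j + (b + 1 : ℕ)) =
      frozenWeight k n v (j + (b + 1 : ℕ)) (k - windowPos k j - (b + 1)) •
        headMeet (columns v (j + (k - windowPos k j : ℕ))) (v (j + b)) := by
  have pos := windowPos_add_natCast hkn j hb
  have last : j + ((b + 1 : ℕ) : ZMod n) + ((k - windowPos k j - (b + 1) : ℕ) : ZMod n) =
      j + ((k - windowPos k j : ℕ) : ZMod n) := by
    rw [add_assoc, ← Nat.cast_add, Nat.add_sub_of_le (by omega)]
  have pred : j + ((b + 1 : ℕ) : ZMod n) - 1 = j + (b : ZMod n) := by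
    rw [Nat.cast_succ, ← add_assoc, add_sub_cancel_right]
  have hj := windowPos_pos (k := k) j
  rw [windowStage_of_gt (by omega), Umap_of_one_lt_windowPos (by omega), pos, ← Nat.sub_sub, last,
    pred]

theorem windowStage_add_of_lt (hkn : k ∣ n) (v : ZMod n → Fin k → ℂ) {j : ZMod n} {b : ℕ}
    (hb : k < windowPos k j + b) (hbk : b < k) :
    windowStage (windowPos k j) v (j + b) = v (j + b) := by
  have hj := windowPos_le (k := k) j
  have pos := windowPos_add_natCast_of_lt hkn j hb (by omega)
  exact windowStage_of_lt (by omega) v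

theorem frozen_windowStage (hkn : k ∣ n) (v : ZMod n → Fin k → ℂ) (j : ZMod n) :
    frozen k n (windowStage (windowPos k j) v) j =
      (∏ b ∈ Finset.range (k - windowPos k j),
        frozenWeight k n v (j + (b + 1 : ℕ)) (k - windowPos k j - (b + 1)) *
          frozen k n v (j + (k - windowPos k j : ℕ))) * frozen k n v j := by
  have h0 := windowPos_pos (k := k) j
  have hk := windowPos_le (k := k) j
  refine colDet_eq_prod_mul_colDet (columns v (j + (k - windowPos k j : ℕ)))
    (columns (windowStage (windowPos k j) v) j) (fun b => v (j + b)) _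
    ⟨k - windowPos k j, by omega⟩ (columns_zero v _) ?_ (fun b hb => ?_) (fun b hb => ?_)
  · rw [columns_zero, windowStage_of_eq rfl]
  · exact windowStage_add_of_le hkn v (by simp only at hb; omega)
  · exact windowStage_add_of_lt hkn v (by simp only [Fin.lt_def] at hb; omega) b.isLt

theorem headForm_windowStage (hkn : k ∣ n) (v : ZMod n → Fin k → ℂ) (j : ZMod n) {b : Fin k}
    (hb : b ≠ 0) :
    headForm (columns v (j + (k - windowPos k j : ℕ)))
      (columns (windowStage (windowPos k j) v) j b) = 0 := by
  have hk := windowPos_le (k := k) j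
  rcases le_or_gt (windowPos k j + b) k with hle | hlt
  · obtain ⟨c, hc⟩ := Nat.exists_eq_succ_of_ne_zero (Fin.val_ne_zero_iff.mpr hb)
    rw [columns, hc, windowStage_add_of_le hkn v (by omega), map_smul, headForm_headMeet,
      smul_zero]
  · have later : v (j + ((b : ℕ) : ZMod n)) = columns v (j + (k - windowPos k j : ℕ))
        ⟨windowPos k j + b - k, by omega⟩ := by
      rw [columns, add_assoc, ← Nat.cast_add]
      congr 3
      simp only
      omega
    rw [columns, windowStage_add_of_lt hkn v hlt b.isLt, later]
    exact headForm_column _ (Fin.val_ne_zero_iff.mp (by simp only; omega))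

theorem headMeet_columns_windowStage (hkn : k ∣ n) {v : ZMod n → Fin k → ℂ}
    (hv : Generic k n v) {j : ZMod n} (hj : 1 < windowPos k j) :
    headMeet (columns (windowStage (windowPos k j) v) j) (v (j - 1)) =
      frozenWeight k n v j (k - windowPos k j) • Umap k n v j := by
  have head : columns (windowStage (windowPos k j) v) j 0 =
      columns v (j + (k - windowPos k j : ℕ)) 0 := by
    rw [columns_zero, columns_zero, windowStage_of_eq rfl]
  rw [headMeet_eq_smul (hv (j + (k - windowPos k j : ℕ))) head
    (fun _ => headForm_windowStage hkn v j), colDet_columns, frozen_windowStage hkn v,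
    Umap_of_one_lt_windowPos hj, frozenWeight_eq_prod hv]
  rfl

theorem artin_windowStage (hkn : k ∣ n) {v : ZMod n → Fin k → ℂ} (hv : Generic k n v) {i : ℕ}
    (h0 : 0 < i) (hi : i < k) : artin k n i (windowStage (i + 1) v) = windowStage i v := by
  funext j
  rw [artin_apply h0 hi]
  split_ifs with heq hsucc
  · have pos : windowPos k (j + 1) = i + 1 := by
      simpa only [heq, Nat.cast_one] using windowPos_add_natCast hkn j (b := 1) (by omega)
    rw [windowStage_of_eq pos, windowStage_of_eq heq, add_assoc, ← Nat.cast_one, ← Nat.cast_add]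
    congr 3
    omega
  · have pos : windowPos k (j - 1) = i := by
      rw [windowPos_sub_one hkn (by omega), hsucc, Nat.add_sub_cancel]
    rw [windowStage_of_lt (j := j - 1) (by omega), ← hsucc,
      headMeet_columns_windowStage hkn hv (by omega), windowStage_of_gt (s := i) (by omega)]
  · rcases lt_or_gt_of_ne heq with hlt | hgt
    · rw [windowStage_of_lt hlt, windowStage_of_lt (by omega)]
    · rw [windowStage_of_gt hgt, windowStage_of_gt (by omega)]

theorem artinCompRev_windowStage (hkn : k ∣ n) {v : ZMod n → Fin k → ℂ} (hv : Generic k n v)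
    {i : ℕ} (hi : i < k) : artinCompRev k n i (windowStage (i + 1) v) = windowStage 1 v := by
  induction i with
  | zero => rfl
  | succ i ih => rw [artinCompRev, artin_windowStage hkn hv i.succ_pos hi, ih (by omega)]

end Composition

theorem reversed_consecutive_composition_window_general {k n : ℕ} [NeZero n] (hkn : k ∣ n)
    (j : ZMod n) :
    ∃ e : Fin n → ℤ, ∀ v : ZMod n → Fin k → ℂ, Generic k n v →
      artinCompRev k n (k - 1) v j = laurent k n e v • Umap k n v j := by
  have : NeZero k := ⟨ne_zero_of_dvd_ne_zero (NeZero.ne n) hkn⟩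
  have comp (v : ZMod n → Fin k → ℂ) (hv : Generic k n v) :
      artinCompRev k n (k - 1) v = windowStage 1 v := by
    have stages := artinCompRev_windowStage hkn hv (Nat.sub_lt (NeZero.pos k) one_pos)
    rwa [Nat.sub_add_cancel NeZero.one_le, windowStage_self] at stages
  rcases (Nat.succ_le_of_lt (windowPos_pos (k := k) j)).eq_or_lt with hfirst | hlater
  · obtain ⟨e, he⟩ := isLaurent_one (k := k) (n := n)
    refine ⟨e, fun v hv => ?_⟩
    rw [comp v hv, windowStage_of_eq hfirst.symm, Umap_of_windowPos_eq_one hfirst.symm, ← he v hv,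
      one_smul]
  · obtain ⟨e, he⟩ := isLaurent_frozenWeight (k := k) j (k - windowPos k j)
    exact ⟨e, fun v hv => by rw [comp v hv, windowStage_of_gt hlater, ← he v hv]⟩

/-- Window formula for the reversed consecutive composition (key computation in
the proof of Proposition 8.2): `σ_1 ∘ σ_2 ∘ ⋯ ∘ σ_{k−1}` agrees componentwise
with `U`, up to signs and Laurent monomials in the frozen minors. -/
theorem reversed_consecutive_composition_window
    (k r n : ℕ) (hk : 2 ≤ k) (hr : 2 ≤ r) (hn : n = r * k) (j : ZMod n) :
    ∃ (ε : ℂ) (e : Fin n → ℤ), (ε = 1 ∨ ε = -1) ∧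
      ∀ v : ZMod n → Fin k → ℂ, Generic k n v →
        artinCompRev k n (k - 1) v j = (ε * laurent k n e v) • Umap k n v j := by
  have : NeZero n := ⟨by rw [hn]; positivity⟩
  obtain ⟨e, he⟩ := reversed_consecutive_composition_window_general (Dvd.intro_left r hn.symm) j
  exact ⟨1, e, Or.inl rfl, fun v hv => by rw [he v hv, one_mul]⟩

end
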